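/- Fix x, t ∈ ℝ and arbitrary real constants Ω₁, …, Ω_g, and define G(λ) = (R(λ)/(2πi)) Σ_{j=1}^{g} ∫_{β_j}^{α_{j+1}} (Ω_j − 2θ⁺(ζ; x, t)) / ( R(ζ)(ζ − λ) ) dζ. Then G is analytic on ℂ∖[0, ∞); for λ in any open band (α_j, β_j) or in (α_{g+1}, ∞), the boundary values G^±(λ) = lim_{ε↓0} G(λ ± iε) exist continuously and satisfy G⁺(λ) + G⁻(λ) = 0; and for λ in the open gap (β_j, α_{j+1}) the boundary values exist continuously and satisfy G⁺(λ) − G⁻(λ) + 2θ⁺(λ; x, t) = Ω_j. -/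

import Mathlib

open Complex Filter

/-!
With `φ j = Ω_j - 2θ⁺`, the quotient `G / R` is, up to the factor `2πi`, a sum of Cauchy integrals
of `φ j / R` over the gaps. By the Sokhotski–Plemelj formula each of them jumps by `2πi φ j / R`
across its own gap and is analytic elsewhere, so after multiplication by `R` the jump of `G` on a
gap is `φ j`, while on a band `G` inherits the sign change of `R`. The densities are integrable
because the simple zeros of `P` at the ends of a gap only produce inverse square root
singularities.
-/

open MeasureTheory Set
open scoped Topology

section BoundaryValues

/-- `G` has the boundary values `yp` from above and `ym` from below at the real point `x₀`. The
approach is unrestricted within each open half-plane rather than vertical: this is what makes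
boundary values depend continuously on `x₀`. -/
def HasBoundaryValues (G : ℂ → ℂ) (x₀ : ℝ) (yp ym : ℂ) : Prop :=
  Tendsto G (𝓝[{z | 0 < z.im}] x₀) (𝓝 yp) ∧ Tendsto G (𝓝[{z | z.im < 0}] x₀) (𝓝 ym)

theorem tendsto_add_mul_I_nhdsWithin (x₀ : ℝ) :
    Tendsto (fun ε : ℝ => (x₀ : ℂ) + ε * I) (𝓝[>] 0) (𝓝[{z | 0 < z.im}] x₀) := by
  refine tendsto_nhdsWithin_of_tendsto_nhds_of_eventually_within _ ?_ ?_
  · exact tendsto_nhdsWithin_of_tendsto_nhds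
      (Continuous.tendsto' (by fun_prop) _ _ (by simp))
  · filter_upwards [self_mem_nhdsWithin] with ε hε using by simpa using hε

theorem tendsto_sub_mul_I_nhdsWithin (x₀ : ℝ) :
    Tendsto (fun ε : ℝ => (x₀ : ℂ) - ε * I) (𝓝[>] 0) (𝓝[{z | z.im < 0}] x₀) := by
  refine tendsto_nhdsWithin_of_tendsto_nhds_of_eventually_within _ ?_ ?_
  · exact tendsto_nhdsWithin_of_tendsto_nhds
      (Continuous.tendsto' (by fun_prop) _ _ (by simp))
  · filter_upwards [self_mem_nhdsWithin] with ε hε using by simpa using hε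

theorem ofReal_mem_closure_im_pos (x₀ : ℝ) : (x₀ : ℂ) ∈ closure {z : ℂ | 0 < z.im} := by
  simp

theorem ofReal_mem_closure_im_neg (x₀ : ℝ) : (x₀ : ℂ) ∈ closure {z : ℂ | z.im < 0} := by
  simp

namespace HasBoundaryValues

variable {G H : ℂ → ℂ} {x₀ : ℝ} {yp ym wp wm : ℂ}

theorem of_continuousAt (hG : ContinuousAt G x₀) : HasBoundaryValues G x₀ (G x₀) (G x₀) :=
  ⟨hG.tendsto.mono_left nhdsWithin_le_nhds, hG.tendsto.mono_left nhdsWithin_le_nhds⟩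

theorem add (hG : HasBoundaryValues G x₀ yp ym) (hH : HasBoundaryValues H x₀ wp wm) :
    HasBoundaryValues (fun z => G z + H z) x₀ (yp + wp) (ym + wm) :=
  ⟨hG.1.add hH.1, hG.2.add hH.2⟩

theorem sub (hG : HasBoundaryValues G x₀ yp ym) (hH : HasBoundaryValues H x₀ wp wm) :
    HasBoundaryValues (fun z => G z - H z) x₀ (yp - wp) (ym - wm) :=
  ⟨hG.1.sub hH.1, hG.2.sub hH.2⟩

theorem mul (hG : HasBoundaryValues G x₀ yp ym) (hH : HasBoundaryValues H x₀ wp wm) :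
    HasBoundaryValues (fun z => G z * H z) x₀ (yp * wp) (ym * wm) :=
  ⟨hG.1.mul hH.1, hG.2.mul hH.2⟩

theorem div_const (hG : HasBoundaryValues G x₀ yp ym) (c : ℂ) :
    HasBoundaryValues (fun z => G z / c) x₀ (yp / c) (ym / c) :=
  ⟨hG.1.div_const c, hG.2.div_const c⟩

theorem congr (hG : HasBoundaryValues G x₀ yp ym) (h : ∀ z, z.im ≠ 0 → H z = G z) :
    HasBoundaryValues H x₀ yp ym :=
  ⟨hG.1.congr' (eventually_nhdsWithin_of_forall fun z hz => (h z (ne_of_gt hz)).symm),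
    hG.2.congr' (eventually_nhdsWithin_of_forall fun z hz => (h z (ne_of_lt hz)).symm)⟩

theorem unique (h : HasBoundaryValues G x₀ yp ym) (h' : HasBoundaryValues G x₀ wp wm) :
    yp = wp ∧ ym = wm :=
  haveI := mem_closure_iff_nhdsWithin_neBot.1 (ofReal_mem_closure_im_pos x₀)
  haveI := mem_closure_iff_nhdsWithin_neBot.1 (ofReal_mem_closure_im_neg x₀)
  ⟨tendsto_nhds_unique h.1 h'.1, tendsto_nhds_unique h.2 h'.2⟩

theorem tendsto_vertical (h : HasBoundaryValues G x₀ yp ym) :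
    Tendsto (fun ε : ℝ => G (x₀ + ε * I)) (𝓝[>] 0) (𝓝 yp) ∧
      Tendsto (fun ε : ℝ => G (x₀ - ε * I)) (𝓝[>] 0) (𝓝 ym) :=
  ⟨h.1.comp (tendsto_add_mul_I_nhdsWithin x₀), h.2.comp (tendsto_sub_mul_I_nhdsWithin x₀)⟩

theorem exists_continuousOn {S : Set ℝ} (h : ∀ x ∈ S, ∃ yp ym, HasBoundaryValues G x yp ym) :
    ∃ Gp Gm : ℝ → ℂ, ContinuousOn Gp S ∧ ContinuousOn Gm S ∧
      ∀ x ∈ S, HasBoundaryValues G x (Gp x) (Gm x) := by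
  have continuousOn_extend {A : Set ℂ} (hA : ∀ x : ℝ, (x : ℂ) ∈ closure A)
      (hlim : ∀ x ∈ S, ∃ y, Tendsto G (𝓝[A] x) (𝓝 y)) :
      ContinuousOn (fun x : ℝ => extendFrom A G x) S :=
    (continuousOn_extendFrom (image_subset_iff.2 fun x _ => hA x)
      (forall_mem_image.2 hlim)).comp continuous_ofReal.continuousOn (mapsTo_image _ _)
  refine ⟨_, _, continuousOn_extend ofReal_mem_closure_im_pos fun x hx => ?_,
    continuousOn_extend ofReal_mem_closure_im_neg fun x hx => ?_, fun x hx => ?_⟩ <;>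
    obtain ⟨yp, ym, hxG⟩ := h x hx
  · exact ⟨yp, hxG.1⟩
  · exact ⟨ym, hxG.2⟩
  · exact ⟨tendsto_extendFrom ⟨yp, hxG.1⟩, tendsto_extendFrom ⟨ym, hxG.2⟩⟩

end HasBoundaryValues

/-- Near `x₀` the set is convex and `R ^ 2 / w` avoids the slit, so `R` agrees there with one of
the two branches `± √w √(R ^ 2 / w)`, both of which converge. -/
theorem exists_tendsto_of_tendsto_sq {R : ℂ → ℂ} {S : Set ℂ} {x₀ w : ℂ} (hS : Convex ℝ S)
    (hR : ContinuousOn R S) (hw : w ≠ 0) (hsq : Tendsto (fun z => R z ^ 2) (𝓝[S] x₀) (𝓝 w)) :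
    ∃ y, Tendsto R (𝓝[S] x₀) (𝓝 y) := by
  have hquot : Tendsto (fun z => R z ^ 2 / w) (𝓝[S] x₀) (𝓝 1) := by
    simpa [hw] using hsq.div_const w
  obtain ⟨r, hr, hslit⟩ := Metric.mem_nhdsWithin_iff.1
    (hquot.eventually (isOpen_slitPlane.mem_nhds one_mem_slitPlane))
  set T := Metric.ball x₀ r ∩ S
  let s : ℂ → ℂ := fun z => w ^ (1 / 2 : ℂ) * (R z ^ 2 / w) ^ (1 / 2 : ℂ)
  have hT : T ∈ 𝓝[S] x₀ := Metric.mem_nhdsWithin_iff.2 ⟨r, hr, subset_rfl⟩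
  have hs_sq (z : ℂ) : s z ^ 2 = R z ^ 2 := by
    simp only [s, mul_pow, ← cpow_nat_mul]
    norm_num
    field_simp
  have hs_cont : ContinuousOn s T := fun z hz =>
    continuousWithinAt_const.mul
      ((((hR z hz.2).mono inter_subset_right).pow 2 |>.div_const w).cpow
        continuousWithinAt_const (hslit hz))
  have hs_lim : Tendsto s (𝓝[S] x₀) (𝓝 (w ^ (1 / 2 : ℂ) * 1 ^ (1 / 2 : ℂ))) :=
    (hquot.cpow tendsto_const_nhds one_mem_slitPlane).const_mul _
  have hs_ne {z : ℂ} (hz : z ∈ T) : s z ≠ 0 := fun h0 =>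
    slitPlane_ne_zero (hslit hz) (by simp [← hs_sq, h0])
  rcases ((convex_ball x₀ r).inter hS).isPreconnected.eq_or_eq_neg_of_sq_eq
    (hR.mono inter_subset_right) hs_cont (fun z _ => (hs_sq z).symm) hs_ne with h | h
  · exact ⟨_, hs_lim.congr' (eventually_of_mem hT fun z hz => (h hz).symm)⟩
  · exact ⟨_, hs_lim.neg.congr' (eventually_of_mem hT fun z hz => (h hz).symm)⟩

theorem HasBoundaryValues.of_sq {R : ℂ → ℂ} {x₀ : ℝ} {w yp ym : ℂ} (hw : w ≠ 0)
    (hR : ContinuousOn R {z | z.im ≠ 0}) (hsq : HasBoundaryValues (fun z => R z ^ 2) x₀ w w)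
    (hyp : Tendsto (fun ε : ℝ => R (x₀ + ε * I)) (𝓝[>] 0) (𝓝 yp))
    (hym : Tendsto (fun ε : ℝ => R (x₀ - ε * I)) (𝓝[>] 0) (𝓝 ym)) :
    HasBoundaryValues R x₀ yp ym := by
  obtain ⟨vp, hvp⟩ := exists_tendsto_of_tendsto_sq (convex_halfSpace_im_gt 0)
    (hR.mono fun z hz => ne_of_gt hz) hw hsq.1
  obtain ⟨vm, hvm⟩ := exists_tendsto_of_tendsto_sq (convex_halfSpace_im_lt 0)
    (hR.mono fun z hz => ne_of_lt hz) hw hsq.2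
  have hv : HasBoundaryValues R x₀ vp vm := ⟨hvp, hvm⟩
  rwa [tendsto_nhds_unique hyp hv.tendsto_vertical.1,
    tendsto_nhds_unique hym hv.tendsto_vertical.2]

end BoundaryValues

section CauchyTransform

/-- The Cauchy transform (without the factor `1 / (2πi)`) of a density `f` on the real interval
from `p` to `q`. -/
noncomputable def cauchyTransform (p q : ℝ) (f : ℝ → ℂ) (z : ℂ) : ℂ :=
  ∫ ζ in p..q, f ζ / (ζ - z)

variable {p q c d x₀ : ℝ} {f : ℝ → ℂ} {z : ℂ}

theorem notMem_ofReal_image_of_im_ne_zero (hz : z.im ≠ 0) (S : Set ℝ) :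
    z ∉ ((↑) : ℝ → ℂ) '' S := by
  rintro ⟨ζ, -, rfl⟩
  exact hz (ofReal_im ζ)

theorem exists_ball_le_norm_sub_of_isClosed {E : Type*} [SeminormedAddCommGroup E] {K : Set E}
    (hK : IsClosed K) {z₀ : E} (hz₀ : z₀ ∉ K) :
    ∃ δ > 0, ∀ z ∈ Metric.ball z₀ δ, ∀ w ∈ K, δ ≤ ‖w - z‖ := by
  obtain ⟨r, hr, hball⟩ := Metric.isOpen_iff.1 hK.isOpen_compl z₀ hz₀
  refine ⟨r / 2, half_pos hr, fun z hz w hw => ?_⟩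
  have hw₀ : r ≤ dist w z₀ := not_lt.1 fun h => hball h hw
  have hz' : dist z z₀ < r / 2 := hz
  linarith [dist_triangle w z z₀, dist_eq_norm w z]

theorem intervalIntegrable_div_sub (hf : IntervalIntegrable f volume p q)
    (hz : z ∉ ((↑) : ℝ → ℂ) '' uIcc p q) :
    IntervalIntegrable (fun ζ : ℝ => f ζ / (ζ - z)) volume p q := by
  simp_rw [div_eq_mul_inv]
  exact hf.mul_continuousOn (ContinuousOn.inv₀ (by fun_prop) fun ζ hζ h =>
    hz ⟨ζ, hζ, sub_eq_zero.1 h⟩)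

theorem differentiableAt_cauchyTransform (hf : IntervalIntegrable f volume p q)
    (hz : z ∉ ((↑) : ℝ → ℂ) '' uIcc p q) : DifferentiableAt ℂ (cauchyTransform p q f) z := by
  obtain ⟨δ, hδ, hsep⟩ := exists_ball_le_norm_sub_of_isClosed
    (isCompact_uIcc.image continuous_ofReal).isClosed hz
  have hsep' {w : ℂ} (hw : w ∈ Metric.ball z δ) {ζ : ℝ} (hζ : ζ ∈ uIoc p q) : δ ≤ ‖(ζ : ℂ) - w‖ :=
    hsep w hw ζ (mem_image_of_mem _ (uIoc_subset_uIcc hζ))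
  have hball {w : ℂ} (hw : w ∈ Metric.ball z δ) : w ∉ ((↑) : ℝ → ℂ) '' uIcc p q := fun hmem => by
    simpa [hδ.not_ge] using hsep w hw w hmem
  refine (intervalIntegral.hasDerivAt_integral_of_dominated_loc_of_deriv_le
    (F' := fun w (ζ : ℝ) => f ζ / (ζ - w) / (ζ - w)) (bound := fun ζ => ‖f ζ‖ / δ / δ)
    (Metric.ball_mem_nhds z hδ) ?_ (intervalIntegrable_div_sub hf hz)
    ?_ ?_ ?_ ?_).2.differentiableAt
  · filter_upwards [Metric.ball_mem_nhds z hδ] with w hw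
    exact (intervalIntegrable_div_sub hf (hball hw)).def'.aestronglyMeasurable
  · exact (intervalIntegrable_div_sub (intervalIntegrable_div_sub hf hz)
      hz).def'.aestronglyMeasurable
  · refine ae_of_all _ fun ζ hζ w hw => ?_
    rw [norm_div, norm_div]
    have := hsep' hw hζ
    gcongr
  · exact (hf.norm.div_const δ).div_const δ
  · refine ae_of_all _ fun ζ hζ w hw => ?_
    have hne : (ζ : ℂ) - w ≠ 0 := norm_pos_iff.1 (hδ.trans_le (hsep' hw hζ))
    simpa [div_div, sq] using
      (hasDerivAt_const w (f ζ)).fun_div ((hasDerivAt_id' w).const_sub (ζ : ℂ)) hne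

theorem hasBoundaryValues_cauchyTransform_of_notMem (hf : IntervalIntegrable f volume p q)
    (hx₀ : x₀ ∉ uIcc p q) :
    HasBoundaryValues (cauchyTransform p q f) x₀ (cauchyTransform p q f x₀)
      (cauchyTransform p q f x₀) :=
  .of_continuousAt (differentiableAt_cauchyTransform hf (by simpa using hx₀)).continuousAt

theorem cauchyTransform_add_adjacent (hpc : IntervalIntegrable f volume p c)
    (hcq : IntervalIntegrable f volume c q) (hz : z.im ≠ 0) :
    cauchyTransform p q f z = cauchyTransform p c f z + cauchyTransform c q f z :=
  (intervalIntegral.integral_add_adjacent_intervals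
    (intervalIntegrable_div_sub hpc (notMem_ofReal_image_of_im_ne_zero hz _))
    (intervalIntegrable_div_sub hcq (notMem_ofReal_image_of_im_ne_zero hz _))).symm

theorem cauchyTransform_one (hz : z.im ≠ 0) :
    cauchyTransform c d 1 z = log (d - z) - log (c - z) := by
  have hslit (ζ : ℝ) : (ζ : ℂ) - z ∈ slitPlane := Or.inr (by simpa using hz)
  refine intervalIntegral.integral_eq_sub_of_hasDerivAt
    (fun ζ _ => (ofRealCLM.hasDerivAt.sub_const z).clog_real (hslit ζ)) ?_
  exact intervalIntegrable_div_sub intervalIntegrable_const (notMem_ofReal_image_of_im_ne_zero hz _)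

theorem hasBoundaryValues_log_const_sub (hc : c < x₀) :
    HasBoundaryValues (fun z => log (c - z)) x₀ (Real.log (x₀ - c) - Real.pi * I)
      (Real.log (x₀ - c) + Real.pi * I) := by
  have hre : ((c : ℂ) - x₀).re < 0 := by simpa using hc
  have him : ((c : ℂ) - x₀).im = 0 := by simp
  have hnorm : ‖(c : ℂ) - x₀‖ = x₀ - c := by
    rw [← ofReal_sub, norm_real, Real.norm_of_nonpos (by linarith), neg_sub]
  have hsub : Tendsto (fun z : ℂ => (c : ℂ) - z) (𝓝 x₀) (𝓝 (c - x₀)) :=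
    Continuous.tendsto (by fun_prop) _
  rw [← hnorm]
  constructor
  · refine (tendsto_log_nhdsWithin_im_neg_of_re_neg_of_im_zero hre him).comp
      (hsub.inf (tendsto_principal_principal.2 fun z hz => ?_))
    simpa using hz
  · refine (tendsto_log_nhdsWithin_im_nonneg_of_re_neg_of_im_zero hre him).comp
      (hsub.inf (tendsto_principal_principal.2 fun z hz => ?_))
    simpa using le_of_lt hz

theorem hasBoundaryValues_cauchyTransform_one (hx₀ : x₀ ∈ Ioo c d) :
    HasBoundaryValues (cauchyTransform c d 1) x₀
      (log (d - x₀) - (Real.log (x₀ - c) - Real.pi * I))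
      (log (d - x₀) - (Real.log (x₀ - c) + Real.pi * I)) := by
  have hlog : ContinuousAt (fun z : ℂ => log (d - z)) x₀ :=
    ContinuousAt.clog (by fun_prop) (Or.inl (by simpa using hx₀.2))
  exact ((HasBoundaryValues.of_continuousAt hlog).sub (hasBoundaryValues_log_const_sub hx₀.1)).congr
    fun z hz => cauchyTransform_one hz

/-- Subtracting `f z.re`, rather than the fixed value `f x₀`, keeps the quotient bounded by the
Lipschitz constant however `z` approaches `x₀`. -/
theorem continuousAt_integral_sub_re_div {K : NNReal} (hx₀ : x₀ ∈ Ioo c d)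
    (hf : LipschitzOnWith K f (Icc c d)) :
    ContinuousAt (fun z : ℂ => ∫ ζ in c..d, (f ζ - f z.re) / (ζ - z)) x₀ := by
  have hIoc : uIoc c d ⊆ Icc c d := by
    rw [uIoc_of_le (hx₀.1.trans hx₀.2).le]
    exact Ioc_subset_Icc_self
  have hre : Tendsto re (𝓝 (x₀ : ℂ)) (𝓝 x₀) := continuous_re.tendsto' _ _ (ofReal_re x₀)
  have hf_re : ContinuousAt (fun z : ℂ => f z.re) x₀ :=
    (hf.continuousOn.continuousAt (Icc_mem_nhds hx₀.1 hx₀.2)).comp_of_eq continuous_re.continuousAt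
      (ofReal_re x₀)
  refine intervalIntegral.continuousAt_of_dominated_interval (bound := fun _ => (K : ℝ))
    ?_ ?_ intervalIntegrable_const ?_
  · refine Eventually.of_forall fun z => ?_
    have hf_meas : AEStronglyMeasurable f (volume.restrict (uIoc c d)) :=
      (hf.continuousOn.mono hIoc).aestronglyMeasurable measurableSet_uIoc
    exact ((hf_meas.sub aestronglyMeasurable_const).aemeasurable.div
      (by fun_prop)).aestronglyMeasurable
  · filter_upwards [hre (Icc_mem_nhds hx₀.1 hx₀.2)] with z hz
    refine ae_of_all _ fun ζ hζ => ?_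
    rw [norm_div]
    refine div_le_of_le_mul₀ (norm_nonneg _) K.2 ?_
    calc ‖f ζ - f z.re‖ ≤ K * ‖ζ - z.re‖ := hf.norm_sub_le (hIoc hζ) hz
      _ ≤ K * ‖(ζ : ℂ) - z‖ := by
        gcongr
        simpa using abs_re_le_norm ((ζ : ℂ) - z)
  · filter_upwards [Measure.ae_ne volume x₀] with ζ hζ _
    exact (continuousAt_const.sub hf_re).div (by fun_prop)
      (sub_ne_zero.2 (ofReal_injective.ne hζ))

theorem exists_hasBoundaryValues_cauchyTransform_of_lipschitzOnWith {K : NNReal}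
    (hx₀ : x₀ ∈ Ioo c d) (hf : LipschitzOnWith K f (Icc c d)) :
    ∃ y, HasBoundaryValues (cauchyTransform c d f) x₀ (y + Real.pi * I * f x₀)
      (y - Real.pi * I * f x₀) := by
  have hcd : uIcc c d = Icc c d := uIcc_of_le (hx₀.1.trans hx₀.2).le
  have hf_int : IntervalIntegrable f volume c d :=
    (hcd ▸ hf.continuousOn).intervalIntegrable
  have hf_re : ContinuousAt (fun z : ℂ => f z.re) x₀ :=
    (hf.continuousOn.continuousAt (Icc_mem_nhds hx₀.1 hx₀.2)).comp_of_eq continuous_re.continuousAt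
      (ofReal_re x₀)
  have hdecomp (z : ℂ) (hz : z.im ≠ 0) : cauchyTransform c d f z =
      (∫ ζ in c..d, (f ζ - f z.re) / (ζ - z)) + f z.re * cauchyTransform c d 1 z := by
    have hz' := notMem_ofReal_image_of_im_ne_zero hz (uIcc c d)
    have hdiff : IntervalIntegrable (fun ζ => f ζ - f z.re) volume c d :=
      hf_int.sub intervalIntegrable_const
    have hone : IntervalIntegrable (1 : ℝ → ℂ) volume c d := intervalIntegrable_const
    rw [cauchyTransform, cauchyTransform, ← intervalIntegral.integral_const_mul,
      ← intervalIntegral.integral_add (intervalIntegrable_div_sub hdiff hz')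
        ((intervalIntegrable_div_sub hone hz').const_mul _)]
    refine intervalIntegral.integral_congr fun ζ _ => ?_
    simp only [Pi.one_apply]
    ring
  have hlim := ((HasBoundaryValues.of_continuousAt (continuousAt_integral_sub_re_div hx₀ hf)).add
    ((HasBoundaryValues.of_continuousAt hf_re).mul
      (hasBoundaryValues_cauchyTransform_one hx₀))).congr hdecomp
  refine ⟨(∫ ζ in c..d, (f ζ - f x₀) / (ζ - x₀)) +
    f x₀ * (log (d - x₀) - Real.log (x₀ - c)), ?_⟩
  convert hlim using 1 <;> simp only [ofReal_re] <;> ring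

/-- The Sokhotski–Plemelj formula; `y` is the principal value of the integral at `x₀`. -/
theorem exists_hasBoundaryValues_cauchyTransform {K : NNReal} {s : Set ℝ} (hx₀ : x₀ ∈ Ioo p q)
    (hf : IntervalIntegrable f volume p q) (hs : s ∈ 𝓝 x₀) (hfs : LipschitzOnWith K f s) :
    ∃ y, HasBoundaryValues (cauchyTransform p q f) x₀ (y + Real.pi * I * f x₀)
      (y - Real.pi * I * f x₀) := by
  obtain ⟨c, d, hcx, hcd⟩ : ∃ c d, x₀ ∈ Ioo c d ∧ Icc c d ⊆ s ∩ Ioo p q := by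
    obtain ⟨r, hr, hball⟩ := Metric.nhds_basis_closedBall.mem_iff.1
      (inter_mem hs (Ioo_mem_nhds hx₀.1 hx₀.2))
    exact ⟨x₀ - r, x₀ + r, by simpa using hr, Real.closedBall_eq_Icc ▸ hball⟩
  have hle : c ≤ d := (hcx.1.trans hcx.2).le
  have hpc : p < c := (hcd (left_mem_Icc.2 hle)).2.1
  have hdq : d < q := (hcd (right_mem_Icc.2 hle)).2.2
  have hint {u v : ℝ} (hu : p ≤ u) (huv : u ≤ v) (hv : v ≤ q) :
      IntervalIntegrable f volume u v :=
    hf.mono_set (by simpa [uIcc_of_le, huv, hu.trans (huv.trans hv)] using Icc_subset_Icc hu hv)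
  have hf_pc := hint le_rfl hpc.le (hle.trans hdq.le)
  have hf_cd := hint hpc.le hle hdq.le
  have hf_dq := hint (hpc.le.trans hle) hdq.le le_rfl
  have houter_left := hasBoundaryValues_cauchyTransform_of_notMem (x₀ := x₀) hf_pc
    (by simp [uIcc_of_le hpc.le, hcx.1])
  have houter_right := hasBoundaryValues_cauchyTransform_of_notMem (x₀ := x₀) hf_dq
    (by simp [uIcc_of_le hdq.le, hcx.2])
  obtain ⟨y, hinner⟩ := exists_hasBoundaryValues_cauchyTransform_of_lipschitzOnWith hcx
    (hfs.mono (hcd.trans inter_subset_left))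
  have hsum := (houter_left.add (hinner.add houter_right)).congr
    (H := cauchyTransform p q f) fun z hz => by
    rw [cauchyTransform_add_adjacent hf_pc (hf_cd.trans hf_dq) hz,
      cauchyTransform_add_adjacent hf_cd hf_dq hz]
  refine ⟨cauchyTransform p c f x₀ + y + cauchyTransform d q f x₀, ?_⟩
  convert hsum using 1 <;> ring

end CauchyTransform

section InverseSqrt

variable {p q : ℝ}

theorem intervalIntegrable_inv_sqrt_sub_mul_sub (hpq : p < q) :
    IntervalIntegrable (fun ζ : ℝ => (√((ζ - p) * (q - ζ)))⁻¹) volume p q := by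
  have hne : q - p ≠ 0 := (sub_pos.2 hpq).ne'
  have hsub := (Polynomial.Chebyshev.intervalIntegrable_sqrt_one_sub_sq_inv.comp_mul_left
    (c := 2 / (q - p))).comp_sub_right ((p + q) / 2)
  have hp : -1 / (2 / (q - p)) + (p + q) / 2 = p := by field_simp; ring
  have hq : 1 / (2 / (q - p)) + (p + q) / 2 = q := by field_simp; ring
  rw [hp, hq] at hsub
  refine (hsub.const_mul (2 / (q - p))).congr fun ζ _ => ?_
  have hscale : 1 - (2 / (q - p) * (ζ - (p + q) / 2)) ^ 2 =
      (2 / (q - p)) ^ 2 * ((ζ - p) * (q - ζ)) := by field_simp; ring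
  have hpos : 0 < 2 / (q - p) := div_pos two_pos (sub_pos.2 hpq)
  simp only [hscale]
  rw [Real.sqrt_inv, Real.sqrt_mul (sq_nonneg _), Real.sqrt_sq hpos.le, mul_inv,
    mul_inv_cancel_left₀ hpos.ne']

theorem intervalIntegrable_div_of_sq_eq {N h r : ℝ → ℂ} (hpq : p < q)
    (hN : ContinuousOn N (Icc p q)) (hh : ContinuousOn h (Icc p q))
    (hh0 : ∀ ζ ∈ Icc p q, h ζ ≠ 0) (hr : ContinuousOn r (Ioo p q))
    (hsq : ∀ ζ ∈ Ioo p q, r ζ ^ 2 = (ζ - p) * (ζ - q) * h ζ) :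
    IntervalIntegrable (fun ζ => N ζ / r ζ) volume p q := by
  have hnorm {ζ : ℝ} (hζ : ζ ∈ Ioo p q) :
      ‖r ζ‖ = √((ζ - p) * (q - ζ)) * √‖h ζ‖ := by
    have hmul : 0 ≤ (ζ - p) * (q - ζ) :=
      mul_nonneg (sub_nonneg.2 hζ.1.le) (sub_nonneg.2 hζ.2.le)
    rw [← Real.sqrt_sq (norm_nonneg _), ← norm_pow, hsq ζ hζ, norm_mul, ← Real.sqrt_mul hmul]
    congr 2
    rw [← ofReal_sub, ← ofReal_sub, ← ofReal_mul, norm_real, Real.norm_eq_abs,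
      ← abs_neg, ← abs_of_nonneg hmul]
    ring_nf
  have hr0 (ζ : ℝ) (hζ : ζ ∈ Ioo p q) : r ζ ≠ 0 := fun h0 => by
    have := hsq ζ hζ
    simp [h0, hh0 ζ (Ioo_subset_Icc_self hζ), sub_eq_zero, hζ.1.ne', hζ.2.ne] at this
  have hfactor : ContinuousOn (fun ζ => ‖N ζ‖ / √‖h ζ‖) (uIcc p q) := by
    rw [uIcc_of_le hpq.le]
    exact hN.norm.div hh.norm.sqrt fun ζ hζ => Real.sqrt_ne_zero'.2 (norm_pos_iff.2 (hh0 ζ hζ))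
  have hbound : IntegrableOn (fun ζ => ‖N ζ / r ζ‖) (Ioo p q) := by
    refine ((intervalIntegrable_iff_integrableOn_Ioo_of_le hpq.le).1
      ((intervalIntegrable_inv_sqrt_sub_mul_sub hpq).continuousOn_mul hfactor)).congr_fun
      (fun ζ hζ => ?_) measurableSet_Ioo
    simp only [norm_div, hnorm hζ]
    ring
  exact (intervalIntegrable_iff_integrableOn_Ioo_of_le hpq.le).2
    ((integrable_norm_iff (((hN.mono Ioo_subset_Icc_self).div hr hr0).aestronglyMeasurable
      measurableSet_Ioo)).1 hbound)

end InverseSqrt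

section JumpSolution

variable {ι : Type*} {s : Finset ι} {l u : ι → ℝ} {R : ℂ → ℂ} {φ : ι → ℝ → ℂ} {x₀ : ℝ} {z : ℂ}

/-- The solution of the additive scalar Riemann–Hilbert problem with jump `φ i` across each
interval from `l i` to `u i`, built from a function `R` whose boundary values are opposite on the
remaining part of the contour. -/
noncomputable def jumpSolution (s : Finset ι) (l u : ι → ℝ) (R : ℂ → ℂ) (φ : ι → ℝ → ℂ) (z : ℂ) :
    ℂ :=
  R z / (2 * Real.pi * I) * ∑ i ∈ s, cauchyTransform (l i) (u i) (fun ζ => φ i ζ / R ζ) z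

theorem differentiableAt_sum_cauchyTransform {f : ι → ℝ → ℂ}
    (hf : ∀ i ∈ s, IntervalIntegrable (f i) volume (l i) (u i))
    (hz : ∀ i ∈ s, z ∉ ((↑) : ℝ → ℂ) '' uIcc (l i) (u i)) :
    DifferentiableAt ℂ (fun z => ∑ i ∈ s, cauchyTransform (l i) (u i) (f i) z) z :=
  DifferentiableAt.fun_sum fun i hi => differentiableAt_cauchyTransform (hf i hi) (hz i hi)

theorem differentiableAt_jumpSolution (hR : DifferentiableAt ℂ R z)
    (hφR : ∀ i ∈ s, IntervalIntegrable (fun ζ => φ i ζ / R ζ) volume (l i) (u i))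
    (hz : ∀ i ∈ s, z ∉ ((↑) : ℝ → ℂ) '' uIcc (l i) (u i)) :
    DifferentiableAt ℂ (jumpSolution s l u R φ) z :=
  (hR.div_const _).mul (differentiableAt_sum_cauchyTransform hφR hz)

theorem exists_hasBoundaryValues_jumpSolution_neg {ρ : ℂ} (hR : HasBoundaryValues R x₀ ρ (-ρ))
    (hφR : ∀ i ∈ s, IntervalIntegrable (fun ζ => φ i ζ / R ζ) volume (l i) (u i))
    (hx₀ : ∀ i ∈ s, x₀ ∉ uIcc (l i) (u i)) :
    ∃ y, HasBoundaryValues (jumpSolution s l u R φ) x₀ y (-y) := by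
  have hsum := HasBoundaryValues.of_continuousAt
    (differentiableAt_sum_cauchyTransform (z := x₀) hφR (by simpa using hx₀)).continuousAt
  have hmul := (hR.div_const (2 * Real.pi * I)).mul hsum
  rw [neg_div, neg_mul] at hmul
  exact ⟨_, hmul⟩

theorem exists_hasBoundaryValues_jumpSolution_jump [DecidableEq ι] {i : ι} {K : NNReal} {t : Set ℝ}
    (hi : i ∈ s) (hR : ContinuousAt R x₀) (hR0 : R x₀ ≠ 0)
    (hφR : ∀ k ∈ s, IntervalIntegrable (fun ζ => φ k ζ / R ζ) volume (l k) (u k))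
    (ht : t ∈ 𝓝 x₀) (hlip : LipschitzOnWith K (fun ζ => φ i ζ / R ζ) t)
    (hx₀ : x₀ ∈ Ioo (l i) (u i)) (hx₀' : ∀ k ∈ s.erase i, x₀ ∉ uIcc (l k) (u k)) :
    ∃ yp ym, HasBoundaryValues (jumpSolution s l u R φ) x₀ yp ym ∧ yp - ym = φ i x₀ := by
  obtain ⟨y, hy⟩ := exists_hasBoundaryValues_cauchyTransform hx₀ (hφR i hi) ht hlip
  have hrest := HasBoundaryValues.of_continuousAt (differentiableAt_sum_cauchyTransform (z := x₀)
    (fun k hk => hφR k (Finset.mem_of_mem_erase hk)) (by simpa using hx₀')).continuousAt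
  refine ⟨_, _, (((HasBoundaryValues.of_continuousAt hR).div_const (2 * Real.pi * I)).mul
    (hy.add hrest)).congr fun z _ => ?_, ?_⟩
  · exact congrArg (_ * ·) (Finset.add_sum_erase _ _ hi).symm
  · have hpi : (Real.pi : ℂ) ≠ 0 := ofReal_ne_zero.2 Real.pi_ne_zero
    field_simp
    ring

end JumpSolution

section BandsAndGaps

/-- The left endpoints `a` and right endpoints `b` of the bands interlace, with indices starting
at `1`: `a 1 < b 1 < a 2 < ⋯ < b g < a (g + 1)`. -/
def Interlacing (g : ℕ) (a b : ℕ → ℝ) : Prop :=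
  ∀ j ∈ Finset.Icc 1 g, a j < b j ∧ b j < a (j + 1)

/-- The union `σ_B` of the closed bands. -/
def bandSet (g : ℕ) (a b : ℕ → ℝ) : Set ℝ :=
  Ici (a (g + 1)) ∪ ⋃ j ∈ Finset.Icc 1 g, Icc (a j) (b j)

/-- The union of the open bands. -/
def bandInterior (g : ℕ) (a b : ℕ → ℝ) : Set ℝ :=
  Ioi (a (g + 1)) ∪ ⋃ j ∈ Finset.Icc 1 g, Ioo (a j) (b j)

/-- The union of the open gaps. -/
def gapSet (g : ℕ) (a b : ℕ → ℝ) : Set ℝ :=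
  ⋃ j ∈ Finset.Icc 1 g, Ioo (b j) (a (j + 1))

/-- The complement of the closed bands in the complex plane. -/
def bandComplement (g : ℕ) (a b : ℕ → ℝ) : Set ℂ :=
  {z | ¬(z.im = 0 ∧ z.re ∈ bandSet g a b)}

variable {g j k : ℕ} {a b : ℕ → ℝ} {x : ℝ} {z : ℂ}

namespace Interlacing

theorem monotoneOn_left (h : Interlacing g a b) : MonotoneOn a (Icc 1 (g + 1)) := by
  refine monotoneOn_of_le_succ ordConnected_Icc fun j _ hj hj' => ?_
  obtain ⟨hab, hba⟩ := h j (Finset.mem_Icc.2 ⟨hj.1, Nat.le_of_succ_le_succ hj'.2⟩)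
  exact (hab.trans hba).le

theorem left_succ_le (h : Interlacing g a b) (hjk : j < k) (hk : k ≤ g + 1) :
    a (j + 1) ≤ a k :=
  h.monotoneOn_left ⟨by lia, by lia⟩ ⟨by lia, hk⟩ hjk

theorem left_one_lt_right (h : Interlacing g a b) (hj : j ∈ Finset.Icc 1 g) : a 1 < b j := by
  obtain ⟨hj1, hjg⟩ := Finset.mem_Icc.1 hj
  exact (h.left_succ_le hj1 (by lia)).trans_lt (h j hj).1

theorem right_le_right (h : Interlacing g a b) (hj : j ∈ Finset.Icc 1 g)
    (hk : k ∈ Finset.Icc 1 g) (hjk : j ≤ k) : b j ≤ b k := by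
  rcases hjk.eq_or_lt with rfl | hlt
  · rfl
  · have hk' := (Finset.mem_Icc.1 hk).2
    exact ((h j hj).2.trans_le (h.left_succ_le hlt (by lia))).le.trans (h k hk).1.le

theorem notMem_closedGap_of_mem_closedGap (h : Interlacing g a b) (hj : j ∈ Finset.Icc 1 g)
    (hk : k ∈ Finset.Icc 1 g) (hjk : j ≠ k) (hx : x ∈ Icc (b j) (a (j + 1))) :
    x ∉ Icc (b k) (a (k + 1)) := fun hxk => by
  have hjg := (Finset.mem_Icc.1 hj).2
  have hkg := (Finset.mem_Icc.1 hk).2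
  rcases hjk.lt_or_gt with hlt | hlt
  · linarith [hx.2, hxk.1, (h k hk).1, h.left_succ_le hlt (by lia)]
  · linarith [hx.1, hxk.2, (h j hj).1, h.left_succ_le hlt (by lia)]

theorem notMem_closedGap_of_mem_bandInterior (h : Interlacing g a b) (hk : k ∈ Finset.Icc 1 g)
    (hx : x ∈ bandInterior g a b) : x ∉ Icc (b k) (a (k + 1)) := fun hxk => by
  have hkg := (Finset.mem_Icc.1 hk).2
  rcases hx with hx | hx
  · exact (hxk.2.trans (h.left_succ_le (by lia) le_rfl)).not_gt hx
  · obtain ⟨j, hj, hxj⟩ := mem_iUnion₂.1 hx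
    have hjg := (Finset.mem_Icc.1 hj).2
    rcases le_or_gt j k with hjk | hkj
    · exact (hxj.2.trans_le (h.right_le_right hj hk hjk)).not_ge hxk.1
    · exact (hxk.2.trans (h.left_succ_le hkj (by lia))).not_gt hxj.1

theorem notMem_bandSet_of_mem_gap (h : Interlacing g a b) (hk : k ∈ Finset.Icc 1 g)
    (hx : x ∈ Ioo (b k) (a (k + 1))) : x ∉ bandSet g a b := fun hxb => by
  have hkg := (Finset.mem_Icc.1 hk).2
  rcases hxb with hxb | hxb
  · exact (hx.2.trans_le (h.left_succ_le (by lia) le_rfl)).not_ge hxb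
  · obtain ⟨j, hj, hxj⟩ := mem_iUnion₂.1 hxb
    have hjg := (Finset.mem_Icc.1 hj).2
    rcases le_or_gt j k with hjk | hkj
    · exact (hxj.2.trans (h.right_le_right hj hk hjk)).not_gt hx.1
    · exact (hx.2.trans_le (h.left_succ_le hkj (by lia))).not_ge hxj.1

theorem left_one_le_of_mem_bandSet (h : Interlacing g a b) (hx : x ∈ bandSet g a b) :
    a 1 ≤ x := by
  rcases hx with hx | hx
  · exact (h.left_succ_le g.succ_pos le_rfl).trans hx
  · obtain ⟨j, hj, hxj⟩ := mem_iUnion₂.1 hx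
    obtain ⟨hj1, hjg⟩ := Finset.mem_Icc.1 hj
    exact (h.left_succ_le hj1 (by lia)).trans hxj.1

theorem left_one_lt_of_mem_bandInterior (h : Interlacing g a b) (hx : x ∈ bandInterior g a b) :
    a 1 < x := by
  rcases hx with hx | hx
  · exact (h.left_succ_le g.succ_pos le_rfl).trans_lt hx
  · obtain ⟨j, hj, hxj⟩ := mem_iUnion₂.1 hx
    obtain ⟨hj1, hjg⟩ := Finset.mem_Icc.1 hj
    exact (h.left_succ_le hj1 (by lia)).trans_lt hxj.1

theorem uIcc_gap (h : Interlacing g a b) (hj : j ∈ Finset.Icc 1 g) :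
    uIcc (b j) (a (j + 1)) = Icc (b j) (a (j + 1)) :=
  uIcc_of_le (h j hj).2.le

end Interlacing

theorem isOpen_bandComplement : IsOpen (bandComplement g a b) := by
  have hclosed : IsClosed (bandSet g a b) :=
    isClosed_Ici.union (isClosed_biUnion_finset fun _ _ => isClosed_Icc)
  exact ((isClosed_eq continuous_im continuous_const).inter
    (hclosed.preimage continuous_re)).isOpen_compl

theorem ofReal_mem_bandComplement_iff : (x : ℂ) ∈ bandComplement g a b ↔ x ∉ bandSet g a b := by
  simp [bandComplement]

/-- The polynomial `P` whose simple roots are the branch points. -/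
def bandPolynomial (g : ℕ) (a b : ℕ → ℝ) (z : ℂ) : ℂ :=
  (z - a (g + 1)) * ∏ j ∈ Finset.Icc 1 g, ((z - a j) * (z - b j))

/-- The polynomial `P` with the two roots bounding the `j`-th gap removed. -/
def gapCofactor (g : ℕ) (a b : ℕ → ℝ) (j : ℕ) (z : ℂ) : ℂ :=
  (z - a 1) * ∏ k ∈ (Finset.Icc 1 g).erase j, ((z - b k) * (z - a (k + 1)))

theorem bandPolynomial_eq_prod_gaps : bandPolynomial g a b z =
    (z - a 1) * ∏ j ∈ Finset.Icc 1 g, ((z - b j) * (z - a (j + 1))) := by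
  unfold bandPolynomial
  induction g with
  | zero => simp
  | succ g ih =>
    rw [Finset.prod_Icc_succ_top (by lia), Finset.prod_Icc_succ_top (by lia), ← mul_assoc (z - a 1),
      ← ih]
    ring

theorem bandPolynomial_eq_mul_gapCofactor (hj : j ∈ Finset.Icc 1 g) :
    bandPolynomial g a b z = (z - b j) * (z - a (j + 1)) * gapCofactor g a b j z := by
  rw [bandPolynomial_eq_prod_gaps, gapCofactor, ← Finset.mul_prod_erase _ _ hj]
  ring

theorem continuous_bandPolynomial : Continuous (bandPolynomial g a b) := by
  unfold bandPolynomial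
  fun_prop

theorem continuous_gapCofactor : Continuous (gapCofactor g a b j) := by
  unfold gapCofactor
  fun_prop

theorem ofReal_sub_mul_ofReal_sub_ne_zero {p q : ℝ} (hpq : p ≤ q) (hx : x ∉ Icc p q) :
    ((x : ℂ) - p) * (x - q) ≠ 0 :=
  mul_ne_zero (sub_ne_zero.2 (ofReal_injective.ne fun h => hx (by simp [h, hpq])))
    (sub_ne_zero.2 (ofReal_injective.ne fun h => hx (by simp [h, hpq])))

theorem Interlacing.bandPolynomial_ne_zero (h : Interlacing g a b)
    (hx : x ∈ bandInterior g a b) : bandPolynomial g a b x ≠ 0 := by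
  rw [bandPolynomial_eq_prod_gaps]
  refine mul_ne_zero (sub_ne_zero.2 (ofReal_injective.ne
    (h.left_one_lt_of_mem_bandInterior hx).ne')) (Finset.prod_ne_zero_iff.2 fun k hk => ?_)
  exact ofReal_sub_mul_ofReal_sub_ne_zero (h k hk).2.le
    (h.notMem_closedGap_of_mem_bandInterior hk hx)

theorem Interlacing.gapCofactor_ne_zero (h : Interlacing g a b) (hj : j ∈ Finset.Icc 1 g)
    (hx : x ∈ Icc (b j) (a (j + 1))) : gapCofactor g a b j x ≠ 0 := by
  refine mul_ne_zero (sub_ne_zero.2 (ofReal_injective.ne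
    ((h.left_one_lt_right hj).trans_le hx.1).ne')) (Finset.prod_ne_zero_iff.2 fun k hk => ?_)
  obtain ⟨hkj, hk⟩ := Finset.mem_erase.1 hk
  exact ofReal_sub_mul_ofReal_sub_ne_zero (h k hk).2.le
    (h.notMem_closedGap_of_mem_closedGap hj hk hkj.symm hx)

end BandsAndGaps

section BandSqrt

/-- `R` is a branch of `√P` on the complement of the bands that changes sign across each open
band; limits are only required along vertical lines, and are upgraded to full boundary values in
`IsBandSqrt.exists_hasBoundaryValues_neg`. -/
structure IsBandSqrt (g : ℕ) (a b : ℕ → ℝ) (R : ℂ → ℂ) : Prop where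
  differentiableOn : DifferentiableOn ℂ R (bandComplement g a b)
  sq_eq : ∀ z ∈ bandComplement g a b, R z ^ 2 = bandPolynomial g a b z
  exists_tendsto_neg : ∀ x ∈ bandInterior g a b, ∃ ρ : ℂ,
    Tendsto (fun ε : ℝ => R (x + ε * I)) (𝓝[>] 0) (𝓝 ρ) ∧
      Tendsto (fun ε : ℝ => R (x - ε * I)) (𝓝[>] 0) (𝓝 (-ρ))

namespace IsBandSqrt

variable {g j : ℕ} {a b : ℕ → ℝ} {R : ℂ → ℂ} {x : ℝ} {f : ℝ → ℂ}

theorem analyticAt_of_mem_gap (hR : IsBandSqrt g a b R) (h : Interlacing g a b)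
    (hj : j ∈ Finset.Icc 1 g) (hx : x ∈ Ioo (b j) (a (j + 1))) : AnalyticAt ℂ R x :=
  hR.differentiableOn.analyticAt (isOpen_bandComplement.mem_nhds
    (ofReal_mem_bandComplement_iff.2 (h.notMem_bandSet_of_mem_gap hj hx)))

theorem sq_eq_of_mem_gap (hR : IsBandSqrt g a b R) (h : Interlacing g a b)
    (hj : j ∈ Finset.Icc 1 g) (hx : x ∈ Ioo (b j) (a (j + 1))) :
    R x ^ 2 = (x - b j) * (x - a (j + 1)) * gapCofactor g a b j x := by
  rw [hR.sq_eq _ (ofReal_mem_bandComplement_iff.2 (h.notMem_bandSet_of_mem_gap hj hx)),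
    bandPolynomial_eq_mul_gapCofactor hj]

theorem ne_zero_of_mem_gap (hR : IsBandSqrt g a b R) (h : Interlacing g a b)
    (hj : j ∈ Finset.Icc 1 g) (hx : x ∈ Ioo (b j) (a (j + 1))) : R x ≠ 0 := by
  refine (pow_ne_zero_iff two_ne_zero).1 ?_
  rw [hR.sq_eq_of_mem_gap h hj hx]
  exact mul_ne_zero (mul_ne_zero (sub_ne_zero.2 (ofReal_injective.ne hx.1.ne'))
    (sub_ne_zero.2 (ofReal_injective.ne hx.2.ne)))
    (h.gapCofactor_ne_zero hj (Ioo_subset_Icc_self hx))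

theorem intervalIntegrable_div (hR : IsBandSqrt g a b R) (h : Interlacing g a b)
    (hj : j ∈ Finset.Icc 1 g) (hf : ContinuousOn f (Icc (b j) (a (j + 1)))) :
    IntervalIntegrable (fun ζ => f ζ / R ζ) volume (b j) (a (j + 1)) :=
  intervalIntegrable_div_of_sq_eq (h j hj).2 hf
    (continuous_gapCofactor.comp continuous_ofReal).continuousOn
    (fun _ hζ => h.gapCofactor_ne_zero hj hζ)
    (fun _ hζ => ((hR.analyticAt_of_mem_gap h hj hζ).continuousAt.comp
      continuous_ofReal.continuousAt).continuousWithinAt)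
    (fun _ hζ => hR.sq_eq_of_mem_gap h hj hζ)

theorem exists_lipschitzOnWith_div (hR : IsBandSqrt g a b R) (h : Interlacing g a b)
    (hj : j ∈ Finset.Icc 1 g) (hx : x ∈ Ioo (b j) (a (j + 1))) (hf : ContDiffAt ℝ 1 f x) :
    ∃ K, ∃ s ∈ 𝓝 x, LipschitzOnWith K (fun ζ => f ζ / R ζ) s := by
  have hRx : ContDiffAt ℝ 1 (fun ζ : ℝ => R ζ) x :=
    ((hR.analyticAt_of_mem_gap h hj hx).contDiffAt.restrict_scalars ℝ).comp x
      ofRealCLM.contDiff.contDiffAt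
  simpa only [div_eq_mul_inv, Pi.inv_apply] using
    (hf.mul (hRx.inv (hR.ne_zero_of_mem_gap h hj hx))).exists_lipschitzOnWith

theorem exists_hasBoundaryValues_neg (hR : IsBandSqrt g a b R) (h : Interlacing g a b)
    (hx : x ∈ bandInterior g a b) : ∃ ρ, HasBoundaryValues R x ρ (-ρ) := by
  have hmem {z : ℂ} (hz : z.im ≠ 0) : z ∈ bandComplement g a b := fun hz' => hz hz'.1
  obtain ⟨ρ, hp, hm⟩ := hR.exists_tendsto_neg x hx
  exact ⟨ρ, .of_sq (h.bandPolynomial_ne_zero hx)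
    (hR.differentiableOn.continuousOn.mono fun _ => hmem)
    ((HasBoundaryValues.of_continuousAt continuous_bandPolynomial.continuousAt).congr
      fun z hz => hR.sq_eq z (hmem hz)) hp hm⟩

section JumpSolution

variable {φ : ℕ → ℝ → ℂ} {z : ℂ}

theorem differentiableAt_jumpSolution (hR : IsBandSqrt g a b R) (h : Interlacing g a b)
    (hφ : ∀ j ∈ Finset.Icc 1 g, ContinuousOn (φ j) (Icc (b j) (a (j + 1))))
    (hz : ¬(z.im = 0 ∧ a 1 ≤ z.re)) :
    DifferentiableAt ℂ (jumpSolution (Finset.Icc 1 g) b (fun j => a (j + 1)) R φ) z := by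
  have hzR : z ∈ bandComplement g a b := fun hz' =>
    hz ⟨hz'.1, h.left_one_le_of_mem_bandSet hz'.2⟩
  refine _root_.differentiableAt_jumpSolution
    (hR.differentiableOn.differentiableAt (isOpen_bandComplement.mem_nhds hzR))
    (fun j hj => hR.intervalIntegrable_div h hj (hφ j hj)) fun j hj => ?_
  rintro ⟨ζ, hζ, rfl⟩
  rw [h.uIcc_gap hj] at hζ
  exact hz ⟨ofReal_im ζ, (h.left_one_lt_right hj).le.trans hζ.1⟩

theorem exists_hasBoundaryValues_jumpSolution_neg (hR : IsBandSqrt g a b R)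
    (h : Interlacing g a b)
    (hφ : ∀ j ∈ Finset.Icc 1 g, ContinuousOn (φ j) (Icc (b j) (a (j + 1))))
    (hx : x ∈ bandInterior g a b) :
    ∃ y, HasBoundaryValues (jumpSolution (Finset.Icc 1 g) b (fun j => a (j + 1)) R φ) x y (-y) := by
  obtain ⟨ρ, hρ⟩ := hR.exists_hasBoundaryValues_neg h hx
  exact _root_.exists_hasBoundaryValues_jumpSolution_neg hρ
    (fun j hj => hR.intervalIntegrable_div h hj (hφ j hj))
    fun j hj => h.uIcc_gap hj ▸ h.notMem_closedGap_of_mem_bandInterior hj hx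

theorem exists_hasBoundaryValues_jumpSolution_jump (hR : IsBandSqrt g a b R)
    (h : Interlacing g a b)
    (hφ : ∀ j ∈ Finset.Icc 1 g, ContinuousOn (φ j) (Icc (b j) (a (j + 1))))
    (hj : j ∈ Finset.Icc 1 g) (hx : x ∈ Ioo (b j) (a (j + 1))) (hφx : ContDiffAt ℝ 1 (φ j) x) :
    ∃ yp ym, HasBoundaryValues (jumpSolution (Finset.Icc 1 g) b (fun j => a (j + 1)) R φ) x yp ym ∧
      yp - ym = φ j x := by
  obtain ⟨K, s, hs, hlip⟩ := hR.exists_lipschitzOnWith_div h hj hx hφx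
  refine _root_.exists_hasBoundaryValues_jumpSolution_jump hj
    (hR.analyticAt_of_mem_gap h hj hx).continuousAt (hR.ne_zero_of_mem_gap h hj hx)
    (fun k hk => hR.intervalIntegrable_div h hk (hφ k hk)) hs hlip hx fun k hk => ?_
  obtain ⟨hkj, hk⟩ := Finset.mem_erase.1 hk
  exact h.uIcc_gap hk ▸
    h.notMem_closedGap_of_mem_closedGap hj hk hkj.symm (Ioo_subset_Icc_self hx)

end JumpSolution

end IsBandSqrt

end BandSqrt

theorem stmt_10_general {g : ℕ} {a b : ℕ → ℝ} {R : ℂ → ℂ} {φ : ℕ → ℝ → ℂ}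
    (h : Interlacing g a b) (hR : IsBandSqrt g a b R)
    (hφ : ∀ j ∈ Finset.Icc 1 g, ContinuousOn (φ j) (Icc (b j) (a (j + 1))))
    (hφ' : ∀ j ∈ Finset.Icc 1 g, ContDiffOn ℝ 1 (φ j) (Ioo (b j) (a (j + 1)))) :
    let G := jumpSolution (Finset.Icc 1 g) b (fun j => a (j + 1)) R φ
    DifferentiableOn ℂ G {z | ¬(z.im = 0 ∧ a 1 ≤ z.re)} ∧
    ∃ Gp Gm : ℝ → ℂ,
      ContinuousOn Gp (bandInterior g a b ∪ gapSet g a b) ∧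
      ContinuousOn Gm (bandInterior g a b ∪ gapSet g a b) ∧
      (∀ x ∈ bandInterior g a b ∪ gapSet g a b, HasBoundaryValues G x (Gp x) (Gm x)) ∧
      (∀ x ∈ bandInterior g a b, Gp x + Gm x = 0) ∧
      ∀ j ∈ Finset.Icc 1 g, ∀ x ∈ Ioo (b j) (a (j + 1)), Gp x - Gm x = φ j x := by
  intro G
  have hband (x : ℝ) (hx : x ∈ bandInterior g a b) : ∃ y, HasBoundaryValues G x y (-y) :=
    hR.exists_hasBoundaryValues_jumpSolution_neg h hφ hx
  have hgap (j : ℕ) (hj : j ∈ Finset.Icc 1 g) (x : ℝ) (hx : x ∈ Ioo (b j) (a (j + 1))) :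
      ∃ yp ym, HasBoundaryValues G x yp ym ∧ yp - ym = φ j x :=
    hR.exists_hasBoundaryValues_jumpSolution_jump h hφ hj hx
      ((hφ' j hj).contDiffAt (Ioo_mem_nhds hx.1 hx.2))
  have hex (x : ℝ) (hx : x ∈ bandInterior g a b ∪ gapSet g a b) :
      ∃ yp ym, HasBoundaryValues G x yp ym := by
    rcases hx with hx | hx
    · obtain ⟨y, hy⟩ := hband x hx
      exact ⟨y, -y, hy⟩
    · obtain ⟨j, hj, hxj⟩ := mem_iUnion₂.1 hx
      obtain ⟨yp, ym, hy, -⟩ := hgap j hj x hxj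
      exact ⟨yp, ym, hy⟩
  obtain ⟨Gp, Gm, hGp, hGm, hval⟩ := HasBoundaryValues.exists_continuousOn hex
  refine ⟨fun z hz => (hR.differentiableAt_jumpSolution h hφ hz).differentiableWithinAt,
    Gp, Gm, hGp, hGm, hval, fun x hx => ?_, fun j hj x hx => ?_⟩
  · obtain ⟨y, hy⟩ := hband x hx
    obtain ⟨hp, hm⟩ := (hval x (.inl hx)).unique hy
    rw [hp, hm, add_neg_cancel]
  · obtain ⟨yp, ym, hy, hjump⟩ := hgap j hj x hx
    obtain ⟨hp, hm⟩ := (hval x (.inr (mem_iUnion₂.2 ⟨j, hj, hx⟩))).unique hy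
    rw [hp, hm, hjump]

theorem contDiffAt_sqrt_mul_add {x t ζ : ℝ} {n : WithTop ℕ∞} (hζ : ζ ≠ 0) :
    ContDiffAt ℝ n (fun ζ : ℝ => √ζ * (x + 4 * ζ * t)) ζ :=
  (Real.contDiffAt_sqrt hζ).mul (by fun_prop)

/-- In the band/gap setting with `α₁ = 0`, fix `x, t ∈ ℝ` and arbitrary real
constants `Ω₁, …, Ω_g`, and define
`G(λ) = (R(λ)/(2πi)) ∑_j ∫_{β_j}^{α_{j+1}} (Ω_j - 2θ⁺(ζ))/(R(ζ)(ζ - λ)) dζ`.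
Then `G` is analytic on `ℂ ∖ [0, ∞)`; on the open bands and on `(α_{g+1}, ∞)` its boundary
values `G^±` exist continuously and satisfy `G⁺ + G⁻ = 0`; and on each open gap
`(β_j, α_{j+1})` they exist continuously and satisfy `G⁺ - G⁻ + 2θ⁺ = Ω_j`. -/
theorem stmt_10
    (g : ℕ) (hg : 1 ≤ g) (a b : ℕ → ℝ)
    (ha1 : a 1 = 0)
    (hord : ∀ j ∈ Finset.Icc 1 g, a j < b j ∧ b j < a (j + 1))
    (P : ℂ → ℂ)
    (hP : ∀ z : ℂ, P z = (z - (a (g + 1) : ℂ)) *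
      ∏ j ∈ Finset.Icc 1 g, ((z - (a j : ℂ)) * (z - (b j : ℂ))))
    (σB : Set ℝ)
    (hσB : σB = Set.Ici (a (g + 1)) ∪ ⋃ j ∈ Finset.Icc 1 g, Set.Icc (a j) (b j))
    (Ω : Set ℂ) (hΩ : Ω = {z : ℂ | ¬(z.im = 0 ∧ z.re ∈ σB)})
    (R : ℂ → ℂ)
    (hRanal : DifferentiableOn ℂ R Ω)
    (hRsq : ∀ z ∈ Ω, R z ^ 2 = P z)
    (hRasym : Tendsto (fun x : ℝ => R (x : ℂ) / (((|x| ^ ((g : ℝ) + 1/2) : ℝ)) : ℂ))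
      atBot (nhds ((-1 : ℂ) ^ g * Complex.I)))
    (hRgap : ∀ j ∈ Finset.Icc 1 g, ∀ x ∈ Set.Ioo (b j) (a (j + 1)),
      (R (x : ℂ)).re = 0 ∧ R (x : ℂ) ≠ 0)
    (hRband : ∀ x₀ : ℝ,
      ((∃ j ∈ Finset.Icc 1 g, x₀ ∈ Set.Ioo (a j) (b j)) ∨ a (g + 1) < x₀) →
      ∃ Rp Rm : ℂ,
        Tendsto (fun ε : ℝ => R ((x₀ : ℂ) + ε * Complex.I))
          (nhdsWithin 0 (Set.Ioi 0)) (nhds Rp) ∧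
        Tendsto (fun ε : ℝ => R ((x₀ : ℂ) - ε * Complex.I))
          (nhdsWithin 0 (Set.Ioi 0)) (nhds Rm) ∧
        Rp.im = 0 ∧ Rm.im = 0 ∧ Rp ≠ 0 ∧ Rp = -Rm)
    (x t : ℝ) (Ωv : ℕ → ℝ)
    (θp : ℝ → ℝ) (hθp : ∀ ζ : ℝ, θp ζ = Real.sqrt ζ * (x + 4 * ζ * t))
    (G : ℂ → ℂ)
    (hG : ∀ z : ℂ, G z = (R z / (2 * Real.pi * Complex.I)) *
      ∑ j ∈ Finset.Icc 1 g,
        ∫ ζ in (b j)..(a (j + 1)),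
          ((Ωv j : ℂ) - 2 * (θp ζ : ℂ)) / (R (ζ : ℂ) * ((ζ : ℂ) - z)))
    (bands gaps : Set ℝ)
    (hbands : bands = Set.Ioi (a (g + 1)) ∪ ⋃ j ∈ Finset.Icc 1 g, Set.Ioo (a j) (b j))
    (hgaps : gaps = ⋃ j ∈ Finset.Icc 1 g, Set.Ioo (b j) (a (j + 1))) :
    DifferentiableOn ℂ G {z : ℂ | ¬(z.im = 0 ∧ 0 ≤ z.re)} ∧
    ∃ Gp Gm : ℝ → ℂ,
      ContinuousOn Gp (bands ∪ gaps) ∧ ContinuousOn Gm (bands ∪ gaps) ∧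
      (∀ x₀ ∈ bands ∪ gaps,
        Tendsto (fun ε : ℝ => G ((x₀ : ℂ) + ε * Complex.I))
          (nhdsWithin 0 (Set.Ioi 0)) (nhds (Gp x₀)) ∧
        Tendsto (fun ε : ℝ => G ((x₀ : ℂ) - ε * Complex.I))
          (nhdsWithin 0 (Set.Ioi 0)) (nhds (Gm x₀))) ∧
      (∀ x₀ ∈ bands, Gp x₀ + Gm x₀ = 0) ∧
      (∀ j ∈ Finset.Icc 1 g, ∀ x₀ ∈ Set.Ioo (b j) (a (j + 1)),
        Gp x₀ - Gm x₀ + 2 * (θp x₀ : ℂ) = (Ωv j : ℂ)) := by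
  obtain rfl : P = bandPolynomial g a b := funext hP
  subst hσB hΩ hbands hgaps
  have hR : IsBandSqrt g a b R := by
    refine ⟨hRanal, hRsq, fun x₀ hx₀ => ?_⟩
    obtain ⟨Rp, Rm, hp, hm, -, -, -, rfl⟩ := hRband x₀ (by
      simpa only [bandInterior, mem_union, mem_Ioi, mem_iUnion, exists_prop,
        or_comm] using hx₀)
    exact ⟨-Rm, hp, by rwa [neg_neg]⟩
  let φ (j : ℕ) (ζ : ℝ) : ℂ := Ωv j - 2 * θp ζ
  obtain rfl : G = jumpSolution (Finset.Icc 1 g) b (fun j => a (j + 1)) R φ :=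
    funext fun z => by simp only [hG, jumpSolution, cauchyTransform, div_div, φ]
  have hφ (j : ℕ) {ζ : ℝ} (hζ : 0 < ζ) : ContDiffAt ℝ 1 (φ j) ζ :=
    contDiffAt_const.sub (contDiffAt_const.mul (ofRealCLM.contDiff.contDiffAt.comp ζ
      (funext hθp ▸ contDiffAt_sqrt_mul_add hζ.ne')))
  have hpos {j : ℕ} (hj : j ∈ Finset.Icc 1 g) : 0 < b j :=
    ha1 ▸ Interlacing.left_one_lt_right hord hj
  obtain ⟨hdiff, Gp, Gm, hGp, hGm, hval, hband, hgap⟩ := stmt_10_general hord hR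
    (fun j hj ζ hζ => (hφ j ((hpos hj).trans_le hζ.1)).continuousAt.continuousWithinAt)
    (fun j hj ζ hζ => (hφ j ((hpos hj).trans hζ.1)).contDiffWithinAt)
  exact ⟨ha1 ▸ hdiff, Gp, Gm, hGp, hGm, fun x₀ hx₀ => (hval x₀ hx₀).tendsto_vertical, hband,
    fun j hj x₀ hx₀ => eq_sub_iff_add_eq.1 (hgap j hj x₀ hx₀)⟩
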